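/- Let t ≥ 3 be an integer and let M be a matroid admitting a cyclic (t−1,t)-ordering e_1, e_2, …, e_n with n ≥ 6t−10. Then for every index i: every t-element circuit C of M containing X_i satisfies C ⊆ σ[i−1, i+t−1], and every t-element cocircuit C* of M containing X_i satisfies C* ⊆ σ[i−1, i+t−1]. -/

import Mathlib

open Set

namespace CyclicArr

variable {α : Type*}

/-- `C` is a circuit of the matroid `M`: a minimal dependent set. -/
def Cct (M : Matroid α) (C : Set α) : Prop := Minimal M.Dep C

/-- The set of `len` consecutive elements `{e_i, e_{i+1}, …, e_{i+len-1}}`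
in a cyclic ordering `e`, subscripts mod `n`. -/
def seg {n : ℕ} (e : ZMod n → α) (i : ℤ) (len : ℕ) : Set α :=
  (fun k : ℕ => e ((i + k : ℤ) : ZMod n)) '' Set.Iio len

/-- `e` is a cyclic ordering of (the ground set of) `M`. -/
def CyclicOrd {n : ℕ} (M : Matroid α) (e : ZMod n → α) : Prop :=
  Function.Injective e ∧ Set.range e = M.E

/-- `e` is a cyclic `(t-1, t)`-ordering of `M`: every `t-1` consecutive elements
are contained in a `t`-element circuit and a `t`-element cocircuit. -/
def CyclicPropOrd {n : ℕ} (M : Matroid α) (t : ℕ) (e : ZMod n → α) : Prop :=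
  CyclicOrd M e ∧
  ∀ i : ℤ, (∃ C, Cct M C ∧ C.ncard = t ∧ seg e i (t-1) ⊆ C) ∧
           (∃ C, Cct M✶ C ∧ C.ncard = t ∧ seg e i (t-1) ⊆ C)

/-!
A `t`-element circuit through `X_i` is `X_i` with one more element, and likewise for cocircuits;
everything follows from orthogonality (a circuit and a cocircuit never share exactly one element)
applied to two windows that are disjoint or share one element.

Suppose the circuit at `X_i` has its additional element `e_j` to the right of `X_i` but not next to
it. If `e_j` is fewer than `t - 1` places beyond `e_{i+t-1}`, the additional elements at
`X_{i-t+2}`, `X_{i+1}`, `X_{i+t-1}`, `X_{i+t}`, `X_{j-1}`, `X_j` and `X_{j+t-2}` cannot all be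
chosen; the first and the last of these windows are disjoint because `n ≥ 5t - 8`. If `e_j` is
further away, the cocircuit at `X_{j-1}` and the circuit at `X_{j-t+1}` have the same additional
element, which lies in `X_i`, and for one of the two it is strictly closer to its window than `e_j`
is to `X_i`, without being next to it. Reversing the ordering and inducting on the distance rules
this out.
-/

section Seg

variable {n : ℕ} {e : ZMod n → α} {i k x : ℤ} {l l' : ℕ} {a : α}

lemma mem_seg_iff : a ∈ seg e i l ↔ ∃ x : ℤ, i ≤ x ∧ x < i + l ∧ e x = a := by
  constructor
  · rintro ⟨m, hm, rfl⟩
    exact ⟨i + m, by omega, by have := mem_Iio.1 hm; omega, rfl⟩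
  · rintro ⟨x, hix, hxi, rfl⟩
    refine ⟨(x - i).toNat, mem_Iio.2 (by omega), ?_⟩
    have hx : i + ((x - i).toNat : ℤ) = x := by omega
    simp only [hx]

lemma apply_mem_seg (hix : i ≤ x) (hxi : x < i + l) : e x ∈ seg e i l :=
  mem_seg_iff.2 ⟨x, hix, hxi, rfl⟩

lemma seg_subset_seg (hki : k ≤ i) (hik : i + l ≤ k + l') : seg e i l ⊆ seg e k l' := by
  intro a ha
  obtain ⟨x, hix, hxi, rfl⟩ := mem_seg_iff.1 ha
  exact apply_mem_seg (by omega) (by omega)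

lemma eq_or_mem_seg_add_one (ha : a ∈ seg e i l) : a = e i ∨ a ∈ seg e (i + 1) l := by
  obtain ⟨x, hix, hxi, rfl⟩ := mem_seg_iff.1 ha
  obtain rfl | hlt := eq_or_lt_of_le hix
  · exact .inl rfl
  · exact .inr (apply_mem_seg hlt (by omega))

lemma disjoint_seg (he : Function.Injective e) (hik : i + l ≤ k) (hki : k + l' ≤ i + n) :
    Disjoint (seg e i l) (seg e k l') := by
  refine Set.disjoint_left.2 fun a ha ha' => ?_
  obtain ⟨x, hix, hxi, rfl⟩ := mem_seg_iff.1 ha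
  obtain ⟨y, hky, hyk, hyx⟩ := mem_seg_iff.1 ha'
  have hdvd : (n : ℤ) ∣ y - x := (ZMod.intCast_eq_intCast_iff_dvd_sub x y n).1 (he hyx.symm)
  have := Int.le_of_dvd (by omega) hdvd
  omega

lemma ncard_seg (he : Function.Injective e) (hl : l ≤ n) : (seg e i l).ncard = l := by
  have hinj : InjOn (fun m : ℕ => e ((i + m : ℤ) : ZMod n)) (Iio l) := by
    intro a ha b hb hab
    have hcast : (a : ZMod n) = b := by simpa using he hab
    exact ((ZMod.natCast_eq_natCast_iff a b n).1 hcast).eq_of_lt_of_lt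
      (ha.trans_le hl) (hb.trans_le hl)
  rw [seg, hinj.ncard_image, ← Finset.coe_Iio, ncard_coe_finset, Nat.card_Iio]

lemma seg_eq_range [NeZero n] (e : ZMod n → α) (i : ℤ) : seg e i n = range e := by
  refine (image_subset_range _ _).trans (range_comp_subset_range _ _) |>.antisymm ?_
  rintro _ ⟨z, rfl⟩
  exact ⟨(z - i).val, ZMod.val_lt _, by simp⟩

lemma seg_comp_neg (e : ZMod n → α) (i : ℤ) (l : ℕ) :
    seg (fun z => e (-z)) i l = seg e (1 - i - l) l := by
  ext a
  simp only [mem_seg_iff]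
  constructor <;> rintro ⟨x, hix, hxi, rfl⟩ <;>
    exact ⟨-x, by omega, by omega, by simp⟩

lemma seg_comp_neg_reflect (e : ZMod n → α) (i : ℤ) (l : ℕ) :
    seg (fun z => e (-z)) (1 - i - l) l = seg e i l := by
  rw [seg_comp_neg]
  ring_nf

end Seg

section Orthogonality

variable {M : Matroid α} {S T : Set α} {x y s : α}

lemma mem_of_isCircuit_insert_of_isCocircuit_insert (hC : M.IsCircuit (insert x S))
    (hK : M.IsCocircuit (insert y T)) (hST : Disjoint S T) (hxT : x ∈ T) : y ∈ S := by
  obtain ⟨z, ⟨hzC, hzK⟩, hzx⟩ := (hC.isCocircuit_inter_nontrivial hK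
    ⟨x, mem_insert x S, mem_insert_of_mem y hxT⟩).exists_ne x
  have hzS : z ∈ S := hzC.resolve_left hzx
  obtain rfl | hzT := hzK
  · exact hzS
  · exact absurd hzT (hST.notMem_of_mem_left hzS)

lemma mem_or_mem_or_eq_of_inter_eq_singleton (hC : M.IsCircuit (insert x S))
    (hK : M.IsCocircuit (insert y T)) (hST : S ∩ T = {s}) : x ∈ T ∨ y ∈ S ∨ x = y := by
  obtain ⟨hsS, hsT⟩ : s ∈ S ∩ T := hST ▸ mem_singleton s
  obtain ⟨z, ⟨hzC, hzK⟩, hzs⟩ := (hC.isCocircuit_inter_nontrivial hK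
    ⟨s, mem_insert_of_mem x hsS, mem_insert_of_mem y hsT⟩).exists_ne s
  obtain rfl | hzS := hzC
  · exact hzK.elim (fun hzy => .inr (.inr hzy)) .inl
  · obtain rfl | hzT := hzK
    · exact .inr (.inl hzS)
    · exact absurd (hST ▸ ⟨hzS, hzT⟩ : z ∈ ({s} : Set α)) hzs

end Orthogonality

/-- The window `seg e i L` becomes a circuit of `M` on adding the element `x` outside it. With
`L = t - 1` this describes the `t`-element circuits containing `X_i`; the cocircuits are obtained
by taking `M✶` for `M`. -/
def Completes {n : ℕ} (M : Matroid α) (e : ZMod n → α) (L : ℕ) (i : ℤ) (x : α) : Prop :=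
  x ∉ seg e i L ∧ M.IsCircuit (insert x (seg e i L))

section Completions

variable {M : Matroid α} {n L : ℕ} {e : ZMod n → α} {i j k : ℤ} {x y z : α}

lemma exists_completes_of_isCircuit {C : Set α} (he : Function.Injective e) (hLn : L ≤ n)
    (hC : M.IsCircuit C) (hCcard : C.ncard = L + 1) (hsub : seg e i L ⊆ C) :
    ∃ x, Completes M e L i x ∧ C = insert x (seg e i L) := by
  have hfin : (seg e i L).Finite := (finite_Iio L).image _
  obtain ⟨x, hx, rfl⟩ := (exists_eq_insert_iff_ncard hfin).2
    ⟨hsub, by rw [ncard_seg he hLn, hCcard]⟩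
  exact ⟨x, ⟨hx, hC⟩, rfl⟩

namespace Completes

lemma dual_dual (hx : Completes M e L i x) : Completes M✶✶ e L i x := by
  rwa [M.dual_dual]

lemma comp_neg (hx : Completes M e L i x) :
    Completes M (fun z => e (-z)) L (1 - i - L) x := by
  rwa [Completes, seg_comp_neg_reflect]

lemma mem_seg_iff_of_disjoint (hx : Completes M e L i x) (hy : Completes M✶ e L k y)
    (hik : Disjoint (seg e i L) (seg e k L)) : x ∈ seg e k L ↔ y ∈ seg e i L :=
  ⟨mem_of_isCircuit_insert_of_isCocircuit_insert hx.2 hy.2 hik,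
    mem_of_isCircuit_insert_of_isCocircuit_insert hy.2 hx.dual_dual.2 hik.symm⟩

lemma mem_seg_or_mem_seg_or_eq (he : Function.Injective e) (hL : 1 ≤ L) (hLn : 2 * L ≤ n)
    (hx : Completes M e L i x) (hy : Completes M✶ e L (i + L - 1) y) :
    x ∈ seg e (i + L - 1) L ∨ y ∈ seg e i L ∨ x = y := by
  have hdisj : Disjoint (seg e i L) (seg e (i + L - 1 + 1) L) :=
    disjoint_seg he (by omega) (by omega)
  have hinter : seg e i L ∩ seg e (i + L - 1) L = {e ((i + L - 1 : ℤ) : ZMod n)} := by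
    refine Subset.antisymm (fun a ⟨hai, hak⟩ => ?_) (singleton_subset_iff.2
      ⟨apply_mem_seg (by omega) (by omega), apply_mem_seg (by omega) (by omega)⟩)
    exact (eq_or_mem_seg_add_one hak).resolve_right (hdisj.notMem_of_mem_left hai)
  exact mem_or_mem_or_eq_of_inter_eq_singleton hx.2 hy.2 hinter

lemma eq_of_notMem_right (he : Function.Injective e) (hL : 1 ≤ L) (hLn : 2 * L ≤ n)
    (hx : Completes M e L i x) (hy : Completes M✶ e L (i + L - 1) y)
    (hz : Completes M✶ e L (i + L) z) (hyi : y ∉ seg e i L) (hzi : z ∉ seg e i L) : x = y := by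
  rcases mem_seg_or_mem_seg_or_eq he hL hLn hx hy with hxk | hyi' | hxy
  · have hx_ne : x ≠ e ((i + L - 1 : ℤ) : ZMod n) := by
      rintro rfl
      exact hx.1 (apply_mem_seg (by omega) (by omega))
    have hxk' : x ∈ seg e (i + L) L := by
      simpa using (eq_or_mem_seg_add_one hxk).resolve_left hx_ne
    exact absurd ((hx.mem_seg_iff_of_disjoint hz
      (disjoint_seg he le_rfl (by omega))).1 hxk') hzi
  · exact absurd hyi' hyi
  · exact hxy

lemma eq_of_notMem_left (he : Function.Injective e) (hL : 1 ≤ L) (hLn : 2 * L ≤ n)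
    (hx : Completes M e L i x) (hy : Completes M✶ e L (i - L + 1) y)
    (hz : Completes M✶ e L (i - L) z) (hyi : y ∉ seg e i L) (hzi : z ∉ seg e i L) : x = y := by
  refine eq_of_notMem_right (e := fun z => e (-z)) (he.comp neg_injective) hL hLn hx.comp_neg
    (y := y) (z := z) ?_ ?_ (by rwa [seg_comp_neg_reflect]) (by rwa [seg_comp_neg_reflect])
  · convert hy.comp_neg using 1
    ring
  · convert hz.comp_neg using 1
    ring

end Completes

namespace CyclicPropOrd

lemma dual {t : ℕ} (he : CyclicPropOrd M t e) : CyclicPropOrd M✶ t e :=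
  ⟨he.1, fun i => ⟨(he.2 i).2, by simpa using (he.2 i).1⟩⟩

lemma comp_neg {t : ℕ} (he : CyclicPropOrd M t e) : CyclicPropOrd M t (fun z => e (-z)) := by
  refine ⟨⟨he.1.1.comp neg_injective, ?_⟩, fun i => ?_⟩
  · rw [← he.1.2]
    exact neg_surjective.range_comp e
  · simpa only [seg_comp_neg] using he.2 (1 - i - (t - 1 : ℕ))

lemma exists_completes (he : CyclicPropOrd M (L + 1) e) (hLn : L ≤ n) (i : ℤ) :
    ∃ x, Completes M e L i x := by
  obtain ⟨C, hC, hCcard, hsub⟩ := (he.2 i).1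
  obtain ⟨x, hx, -⟩ := exists_completes_of_isCircuit he.1.1 hLn hC hCcard hsub
  exact ⟨x, hx⟩

lemma exists_completes_dual_and_completes_add (he : CyclicPropOrd M (L + 1) e) (hL : 2 ≤ L)
    (hij : i + L < j) (hji : j + 2 * L ≤ i + n + 1) (hi : Completes M e L i (e j)) :
    ∃ p : ℤ, i ≤ p ∧ p < i + L ∧
      Completes M✶ e L j (e p) ∧ Completes M e L (j + L - 1) (e p) := by
  obtain ⟨x, hx⟩ := he.exists_completes (by omega) (j + L - 1)
  obtain ⟨y, hy⟩ := he.dual.exists_completes (by omega) j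
  obtain ⟨z, hz⟩ := he.dual.exists_completes (by omega) (j - 1)
  have hyi : y ∈ seg e i L := (hi.mem_seg_iff_of_disjoint hy
    (disjoint_seg he.1.1 (by omega) (by omega))).1 (apply_mem_seg (by omega) (by omega))
  have hzi : z ∈ seg e i L := (hi.mem_seg_iff_of_disjoint hz
    (disjoint_seg he.1.1 (by omega) (by omega))).1 (apply_mem_seg (by omega) (by omega))
  have hdisj : Disjoint (seg e i L) (seg e (j + L - 1) L) :=
    disjoint_seg he.1.1 (by omega) (by omega)
  have hxy : x = y := hx.eq_of_notMem_left he.1.1 (by omega) (by omega)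
    (by convert hy using 1; ring) (by convert hz using 1; ring)
    (hdisj.notMem_of_mem_left hyi) (hdisj.notMem_of_mem_left hzi)
  obtain ⟨p, hip, hpi, rfl⟩ := mem_seg_iff.1 hyi
  exact ⟨p, hip, hpi, hy, hxy ▸ hx⟩

lemma exists_completes_dual_and_completes_sub (he : CyclicPropOrd M (L + 1) e) (hL : 2 ≤ L)
    (hij : i + 2 * L ≤ j) (hji : j + L ≤ i + n) (hi : Completes M e L i (e j)) :
    ∃ q : ℤ, i ≤ q ∧ q < i + L ∧
      Completes M✶ e L (j - 1) (e q) ∧ Completes M e L (j - L) (e q) := by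
  obtain ⟨x, hx⟩ := he.exists_completes (by omega) (j - L)
  obtain ⟨y, hy⟩ := he.dual.exists_completes (by omega) (j - 1)
  obtain ⟨z, hz⟩ := he.dual.exists_completes (by omega) j
  have hyi : y ∈ seg e i L := (hi.mem_seg_iff_of_disjoint hy
    (disjoint_seg he.1.1 (by omega) (by omega))).1 (apply_mem_seg (by omega) (by omega))
  have hzi : z ∈ seg e i L := (hi.mem_seg_iff_of_disjoint hz
    (disjoint_seg he.1.1 (by omega) (by omega))).1 (apply_mem_seg (by omega) (by omega))
  have hdisj : Disjoint (seg e i L) (seg e (j - L) L) := disjoint_seg he.1.1 (by omega) (by omega)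
  have hxy : x = y := hx.eq_of_notMem_right he.1.1 (by omega) (by omega)
    (by simpa using hy) (by simpa using hz)
    (hdisj.notMem_of_mem_left hyi) (hdisj.notMem_of_mem_left hzi)
  obtain ⟨q, hiq, hqi, rfl⟩ := mem_seg_iff.1 hyi
  exact ⟨q, hiq, hqi, hy, hxy ▸ hx⟩

lemma not_completes_add_of_completes (he : CyclicPropOrd M (L + 1) e) (hL : 2 ≤ L)
    (hij : i + L < j) (hji : j + 3 * L ≤ i + n + 2) (hi : Completes M e L i (e j)) :
    ¬ Completes M e L (j + L - 1) (e i) := by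
  intro hm
  obtain ⟨w, hw⟩ := he.dual.exists_completes (by omega) (i - L + 1)
  have hwm : w ∈ seg e (j + L - 1) L := (hm.mem_seg_iff_of_disjoint hw
    (disjoint_seg he.1.1 (by omega) (by omega)).symm).1 (apply_mem_seg (by omega) (by omega))
  rcases hw.mem_seg_or_mem_seg_or_eq he.1.1 (by omega) (by omega)
    (by convert hi.dual_dual using 1; ring) with hwi | hjk | hwj
  · have hdisj : Disjoint (seg e i L) (seg e (j + L - 1) L) :=
      disjoint_seg he.1.1 (by omega) (by omega)
    exact hdisj.notMem_of_mem_right hwm (by convert hwi using 2; ring)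
  · have hdisj : Disjoint (seg e (i - L + 1) L) (seg e j 1) :=
      disjoint_seg he.1.1 (by omega) (by omega)
    exact hdisj.notMem_of_mem_left hjk (apply_mem_seg le_rfl (by omega))
  · have hdisj : Disjoint (seg e j 1) (seg e (j + L - 1) L) :=
      disjoint_seg he.1.1 (by omega) (by omega)
    exact hdisj.notMem_of_mem_right hwm (hwj ▸ apply_mem_seg le_rfl (by omega))

lemma completes_dual_sub_of_completes (he : CyclicPropOrd M (L + 1) e) (hL : 1 ≤ L)
    (hij : i + L < j) (hji : j + 2 * L ≤ i + n + 1) (hi : Completes M e L i (e j))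
    (hx : Completes M e L (i + 1) x) (hxj : x ∈ seg e j L) :
    Completes M✶ e L (i - L + 1) (e j) := by
  obtain ⟨w, hw⟩ := he.dual.exists_completes (by omega) (i - L + 1)
  have hdisj : Disjoint (seg e (i - L + 1) L) (seg e j L) :=
    disjoint_seg he.1.1 (by omega) (by omega)
  have hwj : w = e j := hw.eq_of_notMem_right he.1.1 (by omega) (by omega)
    (by convert hi.dual_dual using 1; ring) (by convert hx.dual_dual using 1; ring)
    (hdisj.notMem_of_mem_right (apply_mem_seg le_rfl (by omega)))
    (hdisj.notMem_of_mem_right hxj)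
  exact hwj ▸ hw

lemma mem_seg_sub_of_completes_dual_add_one (he : CyclicPropOrd M (L + 1) e) (hn : 3 * L ≤ n)
    (hij : i + L < j) (hji : j < i + 2 * L) (hk : Completes M✶ e L (i - L + 1) (e j))
    (hy : Completes M✶ e L (i + 1) y) : y ∈ seg e (i - L + 1) L := by
  obtain ⟨u, hu⟩ := he.exists_completes (by omega) (i + L)
  obtain ⟨v, hv⟩ := he.exists_completes (by omega) (i + 1 + L)
  have huk : u ∈ seg e (i - L + 1) L := (hu.mem_seg_iff_of_disjoint hk
    (disjoint_seg he.1.1 (by omega) (by omega)).symm).2 (apply_mem_seg (by omega) (by omega))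
  have hvk : v ∈ seg e (i - L + 1) L := (hv.mem_seg_iff_of_disjoint hk
    (disjoint_seg he.1.1 (by omega) (by omega)).symm).2 (apply_mem_seg (by omega) (by omega))
  have hdisj : Disjoint (seg e (i - L + 1) L) (seg e (i + 1) L) :=
    disjoint_seg he.1.1 (by omega) (by omega)
  have hyu : y = u := hy.eq_of_notMem_right he.1.1 (by omega) (by omega)
    (by convert hu.dual_dual using 1; ring) hv.dual_dual
    (hdisj.notMem_of_mem_left huk) (hdisj.notMem_of_mem_left hvk)
  exact hyu ▸ huk

lemma not_completes_of_near (he : CyclicPropOrd M (L + 1) e) (hn : 5 * L ≤ n + 3)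
    (hij : i + L < j) (hji : j < i + 2 * L) : ¬ Completes M e L i (e j) := by
  intro hi
  obtain ⟨p, hip, hpi, hj, hm⟩ :=
    he.exists_completes_dual_and_completes_add (by omega) hij (by omega) hi
  have hp_ne : p ≠ i := by
    rintro rfl
    exact he.not_completes_add_of_completes (by omega) hij (by omega) hi hm
  have hp_mem : e p ∈ seg e (i + 1) L := apply_mem_seg (by omega) (by omega)
  obtain ⟨x, hx⟩ := he.exists_completes (by omega) (i + 1)
  have hxj : x ∈ seg e j L := (hx.mem_seg_iff_of_disjoint hj
    (disjoint_seg he.1.1 (by omega) (by omega))).2 hp_mem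
  have hk := he.completes_dual_sub_of_completes (by omega) hij (by omega) hi hx hxj
  obtain ⟨y, hy⟩ := he.dual.exists_completes (by omega) (i + 1)
  have hyk : y ∈ seg e (i - L + 1) L :=
    he.mem_seg_sub_of_completes_dual_add_one (by omega) hij hji hk hy
  have hym : y ∈ seg e (j + L - 1) L := (hm.mem_seg_iff_of_disjoint hy
    (disjoint_seg he.1.1 (by omega) (by omega)).symm).1 hp_mem
  have hdisj : Disjoint (seg e (i - L + 1) L) (seg e (j + L - 1) L) :=
    disjoint_seg he.1.1 (by omega) (by omega)
  exact hdisj.notMem_of_mem_left hyk hym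

lemma not_completes_right (he : CyclicPropOrd M (L + 1) e) (hL : 2 ≤ L) (hn : 5 * L ≤ n + 3)
    (hij : i + L < j) (hji : j + L ≤ i + n) : ¬ Completes M e L i (e j) := by
  induction hN : (j - i).toNat using Nat.strong_induction_on generalizing M e i j with
  | _ N ih =>
  intro hi
  have left {M : Matroid α} (he : CyclicPropOrd M (L + 1) e) {k q : ℤ} (hqk : q + 1 < k)
      (hkq : k + 2 * L ≤ q + n + 1) (hlt : k + L - 1 - q < j - i) :
      ¬ Completes M e L k (e q) := by
    intro hk
    refine ih (-q - (1 - k - L)).toNat (by omega) he.comp_neg (by omega) (by omega) rfl ?_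
    simpa using hk.comp_neg
  obtain hnear | hfar := lt_or_ge j (i + 2 * L)
  · exact he.not_completes_of_near hn hij hnear hi
  obtain ⟨q, hiq, hqi, hcoc, hcirc⟩ :=
    he.exists_completes_dual_and_completes_sub hL hfar hji hi
  by_cases hq : q = i + L - 1
  · exact left he.dual (by omega) (by omega) (by omega) hcoc
  · exact left he (by omega) (by omega) (by omega) hcirc

lemma not_completes_left (he : CyclicPropOrd M (L + 1) e) (hL : 2 ≤ L) (hn : 5 * L ≤ n + 3)
    (hji : j + 1 < i) (hij : i + 2 * L ≤ j + n + 1) : ¬ Completes M e L i (e j) := by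
  intro hi
  refine he.comp_neg.not_completes_right hL hn (i := 1 - i - L) (j := -j) (by omega) (by omega) ?_
  simpa using hi.comp_neg

end CyclicPropOrd

lemma Completes.eq_apply_sub_one_or_eq_apply_add (hx : Completes M e L i x)
    (he : CyclicPropOrd M (L + 1) e) (hL : 2 ≤ L) (hn : 5 * L ≤ n + 3) :
    x = e ((i - 1 : ℤ) : ZMod n) ∨ x = e ((i + L : ℤ) : ZMod n) := by
  have : NeZero n := ⟨by omega⟩
  have hx_mem : x ∈ seg e i n := by
    rw [seg_eq_range, he.1.2]
    exact hx.2.subset_ground (mem_insert _ _)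
  obtain ⟨q, hiq, hqi, rfl⟩ := mem_seg_iff.1 hx_mem
  have hLq : i + L ≤ q := by
    by_contra! hlt
    exact hx.1 (apply_mem_seg hiq hlt)
  obtain rfl | hne := eq_or_ne q (i + L)
  · exact .inr rfl
  obtain hright | hleft := le_or_gt (q + L) (i + n)
  · exact absurd hx (he.not_completes_right hL hn (by omega) hright)
  have hshift : ((q - n : ℤ) : ZMod n) = q := by simp
  rw [← hshift] at hx ⊢
  obtain heq | hne' := eq_or_ne (q - n) (i - 1)
  · exact .inl (by rw [heq])
  · exact absurd hx (he.not_completes_left hL hn (by omega) (by omega))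

lemma CyclicPropOrd.isCircuit_subset_seg {C : Set α} (he : CyclicPropOrd M (L + 1) e) (hL : 2 ≤ L)
    (hn : 5 * L ≤ n + 3) (hC : M.IsCircuit C) (hCcard : C.ncard = L + 1)
    (hsub : seg e i L ⊆ C) : C ⊆ seg e (i - 1) (L + 2) := by
  obtain ⟨x, hx, rfl⟩ := exists_completes_of_isCircuit he.1.1 (by omega) hC hCcard hsub
  refine insert_subset ?_ (seg_subset_seg (by omega) (by omega))
  obtain rfl | rfl := hx.eq_apply_sub_one_or_eq_apply_add he hL hn <;>
    exact apply_mem_seg (by omega) (by omega)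

end Completions

theorem statement_5_general (M : Matroid α) (t n : ℕ) (ht : 3 ≤ t) (hn : 5 * t - 8 ≤ n)
    (e : ZMod n → α) (he : CyclicPropOrd M t e) :
    ∀ i : ℤ,
      (∀ C : Set α, Cct M C → C.ncard = t → seg e i (t - 1) ⊆ C →
        C ⊆ seg e (i - 1) (t + 1)) ∧
      (∀ C : Set α, Cct M✶ C → C.ncard = t → seg e i (t - 1) ⊆ C →
        C ⊆ seg e (i - 1) (t + 1)) := by
  obtain ⟨L, rfl⟩ : ∃ L, t = L + 1 := ⟨t - 1, by omega⟩
  exact fun i => ⟨fun _ => he.isCircuit_subset_seg (by omega) (by omega),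
    fun _ => he.dual.isCircuit_subset_seg (by omega) (by omega)⟩

/-- With `t ≥ 3` and `n ≥ 6t-10`, every `t`-element circuit or cocircuit
containing `X_i` is contained in `σ[i-1, i+t-1]` (a window of `t+1` consecutive elements
starting at position `i-1`). -/
theorem statement_5 (M : Matroid α) (t n : ℕ) (ht : 3 ≤ t) (hn : 6 * t - 10 ≤ n)
    (e : ZMod n → α) (he : CyclicPropOrd M t e) :
    ∀ i : ℤ,
      (∀ C : Set α, Cct M C → C.ncard = t → seg e i (t - 1) ⊆ C →
        C ⊆ seg e (i - 1) (t + 1)) ∧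
      (∀ C : Set α, Cct M✶ C → C.ncard = t → seg e i (t - 1) ⊆ C →
        C ⊆ seg e (i - 1) (t + 1)) := by
  exact statement_5_general M t n ht (by omega) e he

end CyclicArr
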